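/- arXiv:2309.14551 — 11 statements merged into one kernel-verified Lean document; each statement's English description precedes it below -/
import Mathlib

section
/- For every block-reward rate p_B with 0 < p_B ≤ c, every cost c > 0, every discount factor δ ∈ (0,1], every transaction value v ≥ 0, and every natural number N ≥ 1, there exists a penalty parameter ξ₀ > 0 such that for all ξ ≥ ξ₀ the attacker's ex-ante expected profit is negative: δ^(N−1)·(v + p_B·⌈N·(1+ξ)⌉) − c·∑_{n=0}^{⌈N·(1+ξ)⌉−1} δ^(n/(1+ξ))·(1+ξ)^n < 0. -/
open Finset

theorem adess_penalty_makes_attack_unprofitable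
    (c p_B δ v : ℝ) (N : ℕ)
    (hpB : 0 < p_B) (hpBc : p_B ≤ c) (hc : 0 < c)
    (hδ0 : 0 < δ) (hδ1 : δ ≤ 1) (hv : 0 ≤ v) (hN : 1 ≤ N) :
    ∃ ξ₀ > (0 : ℝ), ∀ ξ ≥ ξ₀,
      δ ^ ((N : ℝ) - 1) * (v + p_B * (⌈(N : ℝ) * (1 + ξ)⌉₊ : ℝ)) -
        c * ∑ n ∈ Finset.range ⌈(N : ℝ) * (1 + ξ)⌉₊,
          δ ^ ((n : ℝ) / (1 + ξ)) * (1 + ξ) ^ n < 0 := by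
  have hN' : (1 : ℝ) ≤ N := by exact_mod_cast hN
  have hcd : 0 < c * δ := mul_pos hc hδ0
  have hK : 0 ≤ v + p_B * N + p_B := by positivity
  refine ⟨(v + p_B * N + p_B) / (c * δ) + 2, by positivity, ?_⟩
  intro ξ hξ
  have hdiv : 0 ≤ (v + p_B * N + p_B) / (c * δ) := by positivity
  obtain ⟨y, hy⟩ : ∃ y, y = 1 + ξ := ⟨_, rfl⟩
  rw [← hy]
  have hy3 : 3 ≤ y := by linarith
  have hy0 : 0 < y := by linarith
  have hKy : v + p_B * N + p_B < y * (c * δ) := by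
    rw [← div_lt_iff₀ hcd]; linarith
  have hNy : y ≤ N * y := by nlinarith
  have hM1 : ((⌈(N : ℝ) * y⌉₊ : ℕ) : ℝ) < N * y + 1 := Nat.ceil_lt_add_one (by positivity)
  have hM2 : 2 < ⌈(N : ℝ) * y⌉₊ := by
    rw [Nat.lt_ceil]; push_cast; linarith
  have hsum : δ ^ (((2 : ℕ) : ℝ) / y) * y ^ 2 ≤
      ∑ n ∈ Finset.range ⌈(N : ℝ) * y⌉₊, δ ^ ((n : ℝ) / y) * y ^ n :=
    Finset.single_le_sum (f := fun n : ℕ => δ ^ ((n : ℝ) / y) * y ^ n)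
      (fun n _ => by positivity) (Finset.mem_range.2 hM2)
  have hd : δ ≤ δ ^ (((2 : ℕ) : ℝ) / y) := by
    have := Real.rpow_le_rpow_of_exponent_ge hδ0 hδ1
      (show ((2 : ℕ) : ℝ) / y ≤ 1 by rw [div_le_one hy0]; push_cast; linarith)
    simpa only [Real.rpow_one] using this
  have hd1 : δ ^ ((N : ℝ) - 1) ≤ 1 := Real.rpow_le_one hδ0.le hδ1 (by linarith)
  have h1 : δ * y ^ 2 ≤ δ ^ (((2 : ℕ) : ℝ) / y) * y ^ 2 :=
    mul_le_mul_of_nonneg_right hd (by positivity)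
  have h2 := mul_le_mul_of_nonneg_left (h1.trans hsum) hc.le
  have h3 : δ ^ ((N : ℝ) - 1) * (v + p_B * (⌈(N : ℝ) * y⌉₊ : ℝ)) ≤
      v + p_B * (⌈(N : ℝ) * y⌉₊ : ℝ) := mul_le_of_le_one_left (by positivity) hd1
  have h4 := mul_lt_mul_of_pos_left hM1 hpB
  have h5 := mul_lt_mul_of_pos_right hKy hy0
  have h6 : 0 ≤ (v + p_B) * (y - 1) := mul_nonneg (by linarith) (by linarith)
  nlinarith
end

section
/- For every block-reward rate p_B with 0 < p_B ≤ c, every cost c > 0, every discount factor δ ∈ (0,1], every transaction value v ≥ 0, and every natural number N ≥ 1, the attacker's ex-ante expected profit tends to −∞ as the penalty parameter tends to +∞: the function ξ ↦ δ^(N−1)·(v + p_B·⌈N·(1+ξ)⌉) − c·∑_{n=0}^{⌈N·(1+ξ)⌉−1} δ^(n/(1+ξ))·(1+ξ)^n tends to −∞ as ξ → +∞. -/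
open Finset Filter

theorem adess_profit_tendsto_neg_infty
    (c p_B δ v : ℝ) (N : ℕ)
    (hpB : 0 < p_B) (hpBc : p_B ≤ c) (hc : 0 < c)
    (hδ0 : 0 < δ) (hδ1 : δ ≤ 1) (hv : 0 ≤ v) (hN : 1 ≤ N) :
    Filter.Tendsto
      (fun ξ : ℝ =>
        δ ^ ((N : ℝ) - 1) * (v + p_B * (⌈(N : ℝ) * (1 + ξ)⌉₊ : ℝ)) -
          c * ∑ n ∈ Finset.range ⌈(N : ℝ) * (1 + ξ)⌉₊,
            δ ^ ((n : ℝ) / (1 + ξ)) * (1 + ξ) ^ n)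
      Filter.atTop Filter.atBot := by
  have hb : Filter.Tendsto (fun ξ : ℝ => (1 + ξ) * (p_B * N + -(c * δ * (1 + ξ))) + (v + p_B))
      Filter.atTop Filter.atBot := by
    have h1 : Filter.Tendsto (fun ξ : ℝ => 1 + ξ) Filter.atTop Filter.atTop :=
      tendsto_atTop_add_const_left _ _ tendsto_id
    have h2 : Filter.Tendsto (fun ξ : ℝ => c * δ * (1 + ξ)) Filter.atTop Filter.atTop :=
      h1.const_mul_atTop (mul_pos hc hδ0)
    have h3 := tendsto_atBot_add_const_left Filter.atTop (p_B * N)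
      (tendsto_neg_atTop_atBot.comp h2)
    exact tendsto_atBot_add_const_right _ _ (h1.atTop_mul_atBot₀ h3)
  refine tendsto_atBot_mono' _ ?_ hb
  filter_upwards [eventually_ge_atTop (2 : ℝ)] with ξ hξ
  have hN' : (1 : ℝ) ≤ N := by exact_mod_cast hN
  have hx : (0 : ℝ) < 1 + ξ := by linarith
  have hM : (⌈(N : ℝ) * (1 + ξ)⌉₊ : ℝ) ≤ N * (1 + ξ) + 1 :=
    (Nat.ceil_lt_add_one (by positivity)).le
  have h2M : 2 < ⌈(N : ℝ) * (1 + ξ)⌉₊ := by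
    rw [Nat.lt_ceil]
    push_cast
    nlinarith
  have hS : δ ^ (((2 : ℕ) : ℝ) / (1 + ξ)) * (1 + ξ) ^ 2 ≤
      ∑ n ∈ Finset.range ⌈(N : ℝ) * (1 + ξ)⌉₊, δ ^ ((n : ℝ) / (1 + ξ)) * (1 + ξ) ^ n :=
    Finset.single_le_sum (f := fun n : ℕ => δ ^ ((n : ℝ) / (1 + ξ)) * (1 + ξ) ^ n)
      (fun n _ => by positivity) (Finset.mem_range.mpr h2M)
  have hd : δ ≤ δ ^ (((2 : ℕ) : ℝ) / (1 + ξ)) := by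
    have := Real.rpow_le_rpow_of_exponent_ge hδ0 hδ1
      (show (((2 : ℕ) : ℝ) / (1 + ξ)) ≤ 1 by rw [div_le_one hx]; push_cast; linarith)
    simpa using this
  have hS2 : c * (δ * (1 + ξ) ^ 2) ≤ c * _ :=
    mul_le_mul_of_nonneg_left ((mul_le_mul_of_nonneg_right hd (by positivity)).trans hS) hc.le
  have hδN : δ ^ ((N : ℝ) - 1) ≤ 1 := Real.rpow_le_one hδ0.le hδ1 (by linarith)
  have hA : δ ^ ((N : ℝ) - 1) * (v + p_B * (⌈(N : ℝ) * (1 + ξ)⌉₊ : ℝ)) ≤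
      v + p_B * (⌈(N : ℝ) * (1 + ξ)⌉₊ : ℝ) :=
    mul_le_of_le_one_left (by positivity) hδN
  have hB := mul_le_mul_of_nonneg_left hM hpB.le
  nlinarith
end

section
/- In the undiscounted case δ = 1: for every penalty parameter ξ > 0, every natural number N ≥ 1, and all reals c, p_B with 0 < p_B ≤ c, there exists v̄ > 0 such that for every transaction value v with 0 ≤ v < v̄ the attacker's profit is negative: v + p_B·⌈N·(1+ξ)⌉ − c·∑_{n=0}^{⌈N·(1+ξ)⌉−1} (1+ξ)^n < 0. -/
open Finset

theorem adess_corollary_small_transactions_unprofitable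
    (c p_B ξ : ℝ) (N : ℕ)
    (hξ : 0 < ξ) (hN : 1 ≤ N) (hpB : 0 < p_B) (hpBc : p_B ≤ c) :
    ∃ vbar > (0 : ℝ), ∀ v : ℝ, 0 ≤ v → v < vbar →
      v + p_B * (⌈(N : ℝ) * (1 + ξ)⌉₊ : ℝ) -
        c * ∑ n ∈ Finset.range ⌈(N : ℝ) * (1 + ξ)⌉₊, (1 + ξ) ^ n < 0 := by
  have hM : 1 < ⌈(N : ℝ) * (1 + ξ)⌉₊ := by
    rw [Nat.lt_ceil]
    have : (1 : ℝ) ≤ N := by exact_mod_cast hN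
    push_cast
    nlinarith
  generalize ⌈(N : ℝ) * (1 + ξ)⌉₊ = M at hM ⊢
  have hS : (M : ℝ) < ∑ n ∈ Finset.range M, (1 + ξ) ^ n := by
    have h : ∑ n ∈ Finset.range M, (1 : ℝ) < ∑ n ∈ Finset.range M, (1 + ξ) ^ n := by
      apply Finset.sum_lt_sum
      · intro i _
        exact one_le_pow₀ (by linarith)
      · exact ⟨1, Finset.mem_range.mpr hM, by rw [pow_one]; linarith⟩
    simpa using h
  have hM0 : (0 : ℝ) ≤ M := Nat.cast_nonneg M
  refine ⟨c * ∑ n ∈ Finset.range M, (1 + ξ) ^ n - p_B * M, ?_, fun v _ hv => by linarith⟩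
  have h1 := mul_lt_mul_of_pos_left hS (lt_of_lt_of_le hpB hpBc)
  have h2 := mul_le_mul_of_nonneg_right hpBc hM0
  linarith
end

section
/- Let N ≥ 1 be a natural number and let e, ξ be reals with 0 < e < ξ. Then (a) N·(1+ξ) > N + e, and (b) with full per-block mining-puzzle difficulty adjustment the total ADESS attack hashrate exceeds the Nakamoto attack hashrate: ∑_{n=0}^{⌈N·(1+ξ)⌉−1} (1+ξ)^n > N + e. -/
open Finset

theorem adess_hashrate_exceeds_nakamoto
    (N : ℕ) (e ξ : ℝ) (hN : 1 ≤ N) (he : 0 < e) (heξ : e < ξ) :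
    (N : ℝ) * (1 + ξ) > (N : ℝ) + e ∧
      (∑ n ∈ Finset.range ⌈(N : ℝ) * (1 + ξ)⌉₊, (1 + ξ) ^ n) > (N : ℝ) + e := by
  have hN' : (1 : ℝ) ≤ N := by exact_mod_cast hN
  have h1 : (N : ℝ) * (1 + ξ) > (N : ℝ) + e := by nlinarith
  refine ⟨h1, ?_⟩
  have h2 : (N : ℝ) * (1 + ξ) ≤ (⌈(N : ℝ) * (1 + ξ)⌉₊ : ℝ) := Nat.le_ceil _
  have h3 : (⌈(N : ℝ) * (1 + ξ)⌉₊ : ℝ)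
      ≤ ∑ n ∈ Finset.range ⌈(N : ℝ) * (1 + ξ)⌉₊, (1 + ξ) ^ n := by
    calc (⌈(N : ℝ) * (1 + ξ)⌉₊ : ℝ)
        = ∑ n ∈ Finset.range ⌈(N : ℝ) * (1 + ξ)⌉₊, (1 : ℝ) := by simp
      _ ≤ _ := Finset.sum_le_sum fun n _ => one_le_pow₀ (by linarith)
  linarith
end

section
/- Let δ ∈ (0,1) and let M ≥ 2 be a natural number. Then the total discounted attack cost ξ ↦ ∑_{n=0}^{M−1} δ^(n/(1+ξ))·(1+ξ)^n is strictly increasing on [0, ∞). -/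
open Finset

theorem adess_total_cost_strictMono
    (δ : ℝ) (M : ℕ) (hδ0 : 0 < δ) (hδ1 : δ < 1) (hM : 2 ≤ M) :
    StrictMonoOn
      (fun ξ : ℝ => ∑ n ∈ Finset.range M, δ ^ ((n : ℝ) / (1 + ξ)) * (1 + ξ) ^ n)
      (Set.Ici (0 : ℝ)) := by
  intro a ha b hb hab
  have ha0 : (0 : ℝ) ≤ a := ha
  have hpa : 0 < 1 + a := by linarith
  have hpb : 0 < 1 + b := by linarith
  have h1 : ∀ n : ℕ, δ ^ ((n : ℝ) / (1 + a)) ≤ δ ^ ((n : ℝ) / (1 + b)) := by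
    intro n
    apply Real.rpow_le_rpow_of_exponent_ge hδ0 hδ1.le
    exact div_le_div_of_nonneg_left (Nat.cast_nonneg n) hpa (by linarith)
  apply Finset.sum_lt_sum
  · intro n _
    exact mul_le_mul (h1 n) (pow_le_pow_left₀ hpa.le (by linarith) n)
      (pow_nonneg hpa.le n) (Real.rpow_pos_of_pos hδ0 _).le
  · refine ⟨1, Finset.mem_range.mpr (by omega), ?_⟩
    exact mul_lt_mul' (h1 1) (pow_lt_pow_left₀ (by linarith) hpa.le one_ne_zero)
      (pow_nonneg hpa.le 1) (Real.rpow_pos_of_pos hδ0 _)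
end

section
/- Let δ ∈ (0,1), c > 0, let M ≥ 2 be a natural number, and let R be any real number (the fixed discounted revenue). Then the profit function ξ ↦ R − c·∑_{n=0}^{M−1} δ^(n/(1+ξ))·(1+ξ)^n is strictly decreasing on [0, ∞). In particular, on any interval of penalty parameters over which the required number of attacker blocks ⌈N·(1+ξ)⌉ is constant, the attacker's ex-ante expected profit is strictly decreasing in the penalty parameter ξ. -/
open Finset

theorem adess_profit_strictAnti_on_fixed_blocks
    (δ c R : ℝ) (M : ℕ)
    (hδ0 : 0 < δ) (hδ1 : δ < 1) (hc : 0 < c) (hM : 2 ≤ M) :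
    StrictAntiOn
      (fun ξ : ℝ =>
        R - c * ∑ n ∈ Finset.range M, δ ^ ((n : ℝ) / (1 + ξ)) * (1 + ξ) ^ n)
      (Set.Ici (0 : ℝ)) := by
  intro a ha b hb hab
  have ha' : (0 : ℝ) ≤ a := ha
  have ha1 : (0 : ℝ) < 1 + a := by linarith
  have hb1 : (0 : ℝ) < 1 + b := by linarith
  have hle : ∀ n : ℕ, δ ^ ((n : ℝ) / (1 + a)) ≤ δ ^ ((n : ℝ) / (1 + b)) := by
    intro n
    apply Real.rpow_le_rpow_of_exponent_ge hδ0 hδ1.le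
    apply div_le_div_of_nonneg_left (Nat.cast_nonneg n) ha1
    linarith
  have hsum : ∑ n ∈ Finset.range M, δ ^ ((n : ℝ) / (1 + a)) * (1 + a) ^ n
      < ∑ n ∈ Finset.range M, δ ^ ((n : ℝ) / (1 + b)) * (1 + b) ^ n := by
    apply Finset.sum_lt_sum
    · intro n _
      have hp : (1 + a) ^ n ≤ (1 + b) ^ n :=
        pow_le_pow_left₀ ha1.le (by linarith) n
      exact mul_le_mul (hle n) hp (by positivity) (by positivity)
    · refine ⟨1, Finset.mem_range.2 (by omega), ?_⟩
      have hp : (1 + a) ^ 1 < (1 + b) ^ 1 := by linarith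
      exact mul_lt_mul' (hle 1) hp (by positivity) (by positivity)
  have := mul_lt_mul_of_pos_left hsum hc
  show R - c * _ < R - c * _
  linarith
end

section
/- Let δ ∈ (0,1) and let n ≥ 2 be a natural number. Then the function ξ ↦ δ^(n/(1+ξ))·(1+ξ)^n is strictly convex on the interval (1/(n−1), ∞). -/
theorem adess_discounted_cost_strictConvex_paper
    (δ : ℝ) (n : ℕ) (hδ0 : 0 < δ) (hδ1 : δ < 1) (hn : 2 ≤ n) :
    StrictConvexOn ℝ (Set.Ioi (1 / ((n : ℝ) - 1)))
      (fun ξ : ℝ => δ ^ ((n : ℝ) / (1 + ξ)) * (1 + ξ) ^ n) := by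
  have hL : Real.log δ < 0 := Real.log_neg hδ0 hδ1
  have hn' : (2 : ℝ) ≤ n := by exact_mod_cast hn
  have ha : 0 < 1 / ((n : ℝ) - 1) := by
    apply one_div_pos.mpr; linarith
  have hd : ∀ x : ℝ, 0 < x →
      HasDerivAt (fun ξ : ℝ => δ ^ ((n : ℝ) / (1 + ξ)) * (1 + ξ) ^ n)
        (n * (Real.exp (Real.log δ * (n / (1 + x))) * (1 + x) ^ (n - 2) *
          (1 + x - Real.log δ))) x := by
    intro x hx
    have h1 : (1 + x) ≠ 0 := by positivity
    have e1 : HasDerivAt (fun ξ : ℝ => 1 + ξ) 1 x := (hasDerivAt_id x).const_add 1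
    have e2 := ((((hasDerivAt_const x (n : ℝ)).div e1 h1).const_mul (Real.log δ)).exp).mul
      (e1.pow n)
    have hf : (fun ξ : ℝ => δ ^ ((n : ℝ) / (1 + ξ)) * (1 + ξ) ^ n) =
        fun ξ : ℝ => Real.exp (Real.log δ * ((n : ℝ) / (1 + ξ))) * (1 + ξ) ^ n := by
      funext ξ
      rw [Real.rpow_def_of_pos hδ0]
    rw [hf]
    refine e2.congr_deriv ?_
    obtain ⟨m, rfl⟩ := Nat.exists_eq_add_of_le hn
    have q1 : 2 + m - 2 = m := by omega
    have q2 : 2 + m - 1 = m + 1 := by omega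
    simp only [Pi.div_apply, Pi.pow_apply, q1, q2]
    generalize Real.exp _ = E
    field_simp
    ring
  apply StrictMonoOn.strictConvexOn_of_deriv (convex_Ioi _)
  · intro x hx
    exact (hd x (ha.trans hx)).continuousAt.continuousWithinAt
  · rw [interior_Ioi]
    intro x hx y hy hxy
    have hx0 : 0 < x := ha.trans hx
    have hy0 : 0 < y := ha.trans hy
    rw [(hd x hx0).deriv, (hd y hy0).deriv]
    apply mul_lt_mul_of_pos_left _ (by linarith)
    have k1 : Real.exp (Real.log δ * (n / (1 + x))) ≤ Real.exp (Real.log δ * (n / (1 + y))) := by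
      apply Real.exp_le_exp.mpr
      apply mul_le_mul_of_nonpos_left _ hL.le
      gcongr
    have k2 : (1 + x) ^ (n - 2) ≤ (1 + y) ^ (n - 2) := by gcongr
    apply mul_lt_mul' _ (by linarith) (by linarith) (by positivity)
    gcongr
end

section
/- Let δ ∈ (0,1) and let n ≥ 1 be a natural number. Then the function ξ ↦ δ^(n/(1+ξ))·(1+ξ)^n is strictly convex on (0, ∞). -/
theorem adess_discounted_cost_strictConvex
    (δ : ℝ) (n : ℕ) (hδ0 : 0 < δ) (hδ1 : δ < 1) (hn : 1 ≤ n) :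
    StrictConvexOn ℝ (Set.Ioi (0 : ℝ))
      (fun ξ : ℝ => δ ^ ((n : ℝ) / (1 + ξ)) * (1 + ξ) ^ n) := by
  have hc : Real.log δ < 0 := Real.log_neg hδ0 hδ1
  set c := Real.log δ with hcdef
  have key : ∀ ξ : ℝ, δ ^ ((n : ℝ) / (1 + ξ)) * (1 + ξ) ^ n
      = (Real.exp (c / (1 + ξ)) * (1 + ξ)) ^ n := by
    intro ξ
    rw [Real.rpow_def_of_pos hδ0, mul_pow, ← Real.exp_nat_mul]
    congr 2
    ring
  refine ⟨convex_Ioi 0, ?_⟩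
  intro x hx y hy hxy a b ha hb hab
  simp only [Set.mem_Ioi] at hx hy
  simp only [key, smul_eq_mul]
  obtain ⟨X, hX⟩ : ∃ X, X = 1 + x := ⟨_, rfl⟩
  obtain ⟨Y, hY⟩ : ∃ Y, Y = 1 + y := ⟨_, rfl⟩
  have hu : 1 + (a * x + b * y) = a * X + b * Y := by
    rw [hX, hY]; linear_combination -hab
  rw [hu, ← hX, ← hY]
  have hX0 : 0 < X := by linarith
  have hY0 : 0 < Y := by linarith
  have hXY : X ≠ Y := fun h => hxy (by linarith)
  have hU0 : 0 < a * X + b * Y := by positivity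
  have hne : c / X ≠ c / Y := by
    intro h
    rw [div_eq_div_iff hX0.ne' hY0.ne'] at h
    exact hXY (mul_left_cancel₀ hc.ne h).symm
  have h1 := strictConvexOn_exp.2 (Set.mem_univ (c / X)) (Set.mem_univ (c / Y)) hne
    (show 0 < a * X / (a * X + b * Y) by positivity)
    (show 0 < b * Y / (a * X + b * Y) by positivity) (by field_simp)
  simp only [smul_eq_mul] at h1
  have e1 : a * X / (a * X + b * Y) * (c / X) + b * Y / (a * X + b * Y) * (c / Y)
      = c / (a * X + b * Y) := by
    field_simp
    linear_combination c * hab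
  rw [e1] at h1
  have h2 : Real.exp (c / (a * X + b * Y)) * (a * X + b * Y)
      < a * (Real.exp (c / X) * X) + b * (Real.exp (c / Y) * Y) := by
    have h3 := mul_lt_mul_of_pos_right h1 hU0
    refine h3.trans_eq ?_
    generalize Real.exp (c / X) = p
    generalize Real.exp (c / Y) = q
    field_simp
  refine (pow_lt_pow_left₀ h2 (by positivity) (by omega)).trans_le ?_
  have h4 := (convexOn_pow (𝕜 := ℝ) n).2
    (show Real.exp (c / X) * X ∈ Set.Ici 0 by simp only [Set.mem_Ici]; positivity)
    (show Real.exp (c / Y) * Y ∈ Set.Ici 0 by simp only [Set.mem_Ici]; positivity)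
    ha.le hb.le hab
  simpa only [smul_eq_mul] using h4
end

section
/- Let δ ∈ (0,1), let c, p_B be reals with 0 < p_B ≤ c, let v ≥ 0, let S be any real number, and let K ≥ 1 and M ≥ 1 be natural numbers. Then the function on natural numbers B ↦ δ^(K+B−1)·(v + p_B·(M+B)) − c·(S + ∑_{b=0}^{B−1} δ^(K+b)) is strictly decreasing in B. In particular it is maximized at B = 0, so the attacker optimally broadcasts its chain as soon as it reaches the canonical boundary. -/
open Finset

theorem adess_broadcast_at_canonical_boundary
    (δ c p_B v S : ℝ) (K M : ℕ)
    (hδ0 : 0 < δ) (hδ1 : δ < 1) (hpB : 0 < p_B) (hpBc : p_B ≤ c)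
    (hv : 0 ≤ v) (hK : 1 ≤ K) (hM : 1 ≤ M) :
    StrictAnti
      (fun B : ℕ =>
        δ ^ ((K : ℝ) + B - 1) * (v + p_B * ((M : ℝ) + B)) -
          c * (S + ∑ b ∈ Finset.range B, δ ^ ((K : ℝ) + b))) ∧
    ∀ B : ℕ,
      δ ^ ((K : ℝ) + B - 1) * (v + p_B * ((M : ℝ) + B)) -
          c * (S + ∑ b ∈ Finset.range B, δ ^ ((K : ℝ) + b)) ≤
        δ ^ ((K : ℝ) + 0 - 1) * (v + p_B * ((M : ℝ) + 0)) - c * (S + 0) := by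
  have key : StrictAnti
      (fun B : ℕ =>
        δ ^ ((K : ℝ) + B - 1) * (v + p_B * ((M : ℝ) + B)) -
          c * (S + ∑ b ∈ Finset.range B, δ ^ ((K : ℝ) + b))) := by
    apply strictAnti_nat_of_succ_lt
    intro n
    have hx : 0 < δ ^ ((K : ℝ) + n - 1) := Real.rpow_pos_of_pos hδ0 _
    have h1 : δ ^ ((K : ℝ) + n) = δ ^ ((K : ℝ) + n - 1) * δ := by
      rw [← Real.rpow_add_one hδ0.ne']
      congr 1
      ring
    have h2 : ((K : ℝ) + ((n + 1 : ℕ) : ℝ) - 1) = (K : ℝ) + n := by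
      push_cast
      ring
    simp only [Finset.sum_range_succ]
    rw [h2, h1]
    push_cast
    generalize δ ^ ((K : ℝ) + n - 1) = x at hx
    have hM' : (1 : ℝ) ≤ M := by exact_mod_cast hM
    have hn : (0 : ℝ) ≤ n := Nat.cast_nonneg n
    have hw : 0 < v + p_B * ((M : ℝ) + n) := by
      have : 0 < p_B * ((M : ℝ) + n) := mul_pos hpB (by linarith)
      linarith
    have ha : 0 < x * ((1 - δ) * (v + p_B * ((M : ℝ) + n))) :=
      mul_pos hx (mul_pos (by linarith) hw)
    have hb : 0 ≤ x * (δ * (c - p_B)) :=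
      mul_nonneg hx.le (mul_nonneg hδ0.le (by linarith))
    nlinarith [ha, hb]
  refine ⟨key, fun B => ?_⟩
  have h := key.antitone (Nat.zero_le B)
  simpa only [Nat.cast_zero, Finset.range_zero, Finset.sum_empty] using h
end

section
/- Let δ ∈ (0,1), let n ≥ 1 be a natural number, and let ρ > 0 and a > 0 be reals. Then the function ξ ↦ δ^(n/(1+ρ+a·ξ))·(1+ρ+a·ξ)^n is strictly increasing on [0, ∞). -/
theorem adess_affine_growth_cost_strictMono
    (δ : ℝ) (n : ℕ) (ρ a : ℝ)
    (hδ0 : 0 < δ) (hδ1 : δ < 1) (hn : 1 ≤ n) (hρ : 0 < ρ) (ha : 0 < a) :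
    StrictMonoOn
      (fun ξ : ℝ => δ ^ ((n : ℝ) / (1 + ρ + a * ξ)) * (1 + ρ + a * ξ) ^ n)
      (Set.Ici (0 : ℝ)) := by
  intro x hx y hy hxy
  have hx0 : (0 : ℝ) ≤ x := hx
  have h1 : 0 < 1 + ρ + a * x := by positivity
  have h2 : 1 + ρ + a * x < 1 + ρ + a * y := by
    have := mul_lt_mul_of_pos_left hxy ha
    linarith
  have h3 : (n : ℝ) / (1 + ρ + a * y) ≤ (n : ℝ) / (1 + ρ + a * x) :=
    div_le_div_of_nonneg_left (Nat.cast_nonneg n) h1 h2.le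
  have h4 := Real.rpow_le_rpow_of_exponent_ge hδ0 hδ1.le h3
  have h5 : (1 + ρ + a * x) ^ n < (1 + ρ + a * y) ^ n :=
    pow_lt_pow_left₀ h2 h1.le (by omega)
  exact mul_lt_mul' h4 h5 (pow_nonneg h1.le n) (Real.rpow_pos_of_pos hδ0 _)
end

section
/- Let δ ∈ (0,1], c > 0, 0 < p_B ≤ c, v ≥ 0, let ρ > 0 and a > 0 be reals, and let N ≥ 1 be a natural number. Then there exists ξ₀ > 0 such that for all ξ ≥ ξ₀: δ^(N−1)·(v + p_B·⌈N·(1+ξ)⌉) − c·∑_{n=0}^{⌈N·(1+ξ)⌉−1} δ^(n/(1+ρ+a·ξ))·(1+ρ+a·ξ)^n < 0. -/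
open Finset

theorem adess_affine_growth_attack_unprofitable
    (δ c p_B v ρ a : ℝ) (N : ℕ)
    (hδ0 : 0 < δ) (hδ1 : δ ≤ 1) (hc : 0 < c) (hpB : 0 < p_B) (hpBc : p_B ≤ c)
    (hv : 0 ≤ v) (hρ : 0 < ρ) (ha : 0 < a) (hN : 1 ≤ N) :
    ∃ ξ₀ > (0 : ℝ), ∀ ξ ≥ ξ₀,
      δ ^ ((N : ℝ) - 1) * (v + p_B * (⌈(N : ℝ) * (1 + ξ)⌉₊ : ℝ)) -
        c * ∑ n ∈ Finset.range ⌈(N : ℝ) * (1 + ξ)⌉₊,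
          δ ^ ((n : ℝ) / (1 + ρ + a * ξ)) * (1 + ρ + a * ξ) ^ n < 0 := by
  have hN' : (1:ℝ) ≤ N := by exact_mod_cast hN
  set K : ℝ := v + p_B * (N + 1) with hK
  have hKpos : 0 < K := by positivity
  have hD : 0 < c * δ ^ 2 * a ^ 2 := by positivity
  refine ⟨2 + 2 * K / (c * δ ^ 2 * a ^ 2), by positivity, fun ξ hξ => ?_⟩
  have hq : 0 < 2 * K / (c * δ ^ 2 * a ^ 2) := by positivity
  have hξ2 : 2 ≤ ξ := by linarith
  have hlin : 2 * K < ξ * (c * δ ^ 2 * a ^ 2) := by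
    rw [← div_lt_iff₀ hD]; linarith
  have haξ : 0 < a * ξ := by positivity
  set g : ℝ := 1 + ρ + a * ξ with hg
  have hg1 : 1 ≤ g := by linarith
  have hg0 : 0 < g := by linarith
  have hbig : (3:ℝ) ≤ N * (1 + ξ) := by nlinarith
  have hceil : (⌈(N : ℝ) * (1 + ξ)⌉₊ : ℝ) < N * (1 + ξ) + 1 :=
    Nat.ceil_lt_add_one (by linarith)
  have hM : 3 ≤ ⌈(N : ℝ) * (1 + ξ)⌉₊ := by
    have := hbig.trans (Nat.le_ceil _)
    exact_mod_cast this
  generalize ⌈(N : ℝ) * (1 + ξ)⌉₊ = M at hceil hM ⊢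
  have hterm : δ ^ (((2:ℕ) : ℝ) / g) * g ^ 2 ≤
      ∑ n ∈ Finset.range M, δ ^ ((n : ℝ) / g) * g ^ n :=
    Finset.single_le_sum (f := fun n : ℕ => δ ^ ((n : ℝ) / g) * g ^ n)
      (fun i _ => by positivity) (Finset.mem_range.2 (by omega))
  have hpow : δ ^ 2 ≤ δ ^ (((2:ℕ) : ℝ) / g) := by
    rw [← Real.rpow_natCast δ 2]
    exact Real.rpow_le_rpow_of_exponent_ge hδ0 hδ1 (div_le_self (by positivity) hg1)
  have hgg : (a * ξ) ^ 2 ≤ g ^ 2 := by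
    apply pow_le_pow_left₀ haξ.le; linarith
  have hcost : δ ^ 2 * (a * ξ) ^ 2 ≤ ∑ n ∈ Finset.range M, δ ^ ((n : ℝ) / g) * g ^ n :=
    (mul_le_mul hpow hgg (by positivity) (by positivity)).trans hterm
  have hcost2 := mul_le_mul_of_nonneg_left hcost hc.le
  have hd : δ ^ ((N : ℝ) - 1) ≤ 1 := Real.rpow_le_one hδ0.le hδ1 (by linarith)
  have hrev : δ ^ ((N : ℝ) - 1) * (v + p_B * (M : ℝ)) ≤ v + p_B * (M : ℝ) :=
    mul_le_of_le_one_left (by positivity) hd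
  have h1 : p_B * (M : ℝ) ≤ p_B * (N * (1 + ξ) + 1) := mul_le_mul_of_nonneg_left hceil.le hpB.le
  have h2 : v + p_B * (N * (1 + ξ) + 1) ≤ K * (1 + ξ) := by
    have : 0 ≤ v * ξ := by positivity
    have : 0 ≤ p_B * ξ := by positivity
    rw [hK]; nlinarith
  have h3 : K * (1 + ξ) ≤ 2 * K * ξ := by nlinarith
  have h4 : 2 * K * ξ < c * (δ ^ 2 * (a * ξ) ^ 2) := by
    calc 2 * K * ξ < ξ * (c * δ ^ 2 * a ^ 2) * ξ := mul_lt_mul_of_pos_right hlin (by linarith)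
      _ = _ := by ring
  linarith
end
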